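/- Let (V,E,∂) be a locally finite graph carrying two vertex-coupling families of boundary maps with energy structures (H_v, ι_v, h_v) and (H̃_v, ι̃_v, h̃_v). Let δ > 0, let J_v : H_v → H̃_v and J¹_v : H¹_v → H̃¹_v be bounded with sup_v ‖J_v‖ < ∞, sup_v ‖J¹_v‖ < ∞ and ‖ι̃_v(J¹_v f) − J_v(ι_v f)‖_{H̃_v} ≤ δ·‖f‖_{H¹_v} for all v and f ∈ H¹_v, and let B̃ be a smoothing operator for the coupled space H̃¹ such that ‖B̃(J^{1,dec} f)‖_{H̃^{1,dec}} ≤ δ·‖f‖_{H^{1,dec}} for all f ∈ H¹, where J^{1,dec} := ⊕_v J¹_v. Then J¹ := (id − B̃) ∘ J^{1,dec} maps the coupled space H¹ into the coupled space H̃¹, and for every f ∈ H¹: ‖ι̃^{dec}(J¹ f) − J(ι^{dec} f)‖_{⊕_v H̃_v} ≤ 2δ·‖f‖_{H^{1,dec}}, where J := ⊕_v J_v and ι^{dec}, ι̃^{dec} act componentwise. -/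

import Mathlib

/-- A locally finite graph: countable vertex set `V`, countable edge set `E`,
incidence map `bd e = (∂₋e, ∂₊e)`, no loops, and finitely many edges at each vertex. -/
structure LocallyFiniteGraph (V E : Type*) [Countable V] [Countable E] where
  bd : E → V × V
  no_loops : ∀ e, (bd e).1 ≠ (bd e).2
  locFin : ∀ v : V, {e : E | (bd e).1 = v ∨ (bd e).2 = v}.Finite

theorem lp_two_norm_le_of_pointwise {V : Type*} {A B : V → Type*}
    [∀ v, NormedAddCommGroup (A v)] [∀ v, NormedAddCommGroup (B v)]
    (f : lp A 2) (g : lp B 2) (C : ℝ) (hC : 0 ≤ C)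
    (h : ∀ v, ‖g v‖ ≤ C * ‖f v‖) : ‖g‖ ≤ C * ‖f‖ := by
  have h2 : 0 < (2 : ENNReal).toReal := by norm_num
  refine lp.norm_le_of_forall_sum_le h2 (mul_nonneg hC (norm_nonneg f)) fun s => ?_
  calc ∑ i ∈ s, ‖g i‖ ^ (2 : ENNReal).toReal
      ≤ ∑ i ∈ s, C ^ (2 : ENNReal).toReal * ‖f i‖ ^ (2 : ENNReal).toReal := by
        refine Finset.sum_le_sum fun i _ => ?_
        rw [← Real.mul_rpow hC (norm_nonneg _)]
        exact Real.rpow_le_rpow (norm_nonneg _) (h i) h2.le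
    _ = C ^ (2 : ENNReal).toReal * ∑ i ∈ s, ‖f i‖ ^ (2 : ENNReal).toReal := by
        rw [Finset.mul_sum]
    _ ≤ C ^ (2 : ENNReal).toReal * ‖f‖ ^ (2 : ENNReal).toReal :=
        mul_le_mul_of_nonneg_left (lp.sum_rpow_le_norm_rpow h2 f s) (Real.rpow_nonneg hC _)
    _ = (C * ‖f‖) ^ (2 : ENNReal).toReal := (Real.mul_rpow hC (norm_nonneg f)).symm

/-- Two vertex-coupling families with energy structures
`(H_v, ι_v, h_v)` and `(H̃_v, ι̃_v, h̃_v)`; identification operators `J_v`, `J¹_v` with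
`‖ι̃_v(J¹_v f) − J_v(ι_v f)‖ ≤ δ‖f‖`, and a smoothing operator `B̃` for the coupled
space `H̃¹` with `‖B̃(J^{1,dec}f)‖ ≤ δ‖f‖` on `H¹`.  Then `J¹ = (id − B̃)∘J^{1,dec}` maps
`H¹` into `H̃¹` and `‖ι̃^{dec}(J¹f) − J(ι^{dec}f)‖ ≤ 2δ‖f‖` for every `f ∈ H¹`. -/
theorem stmt13 {V E : Type*} [Countable V] [Countable E]
    (G : LocallyFiniteGraph V E)
    -- first coupling family with energy structure
    (H1 : V → Type*) [∀ v, NormedAddCommGroup (H1 v)] [∀ v, InnerProductSpace ℂ (H1 v)]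
    [∀ v, CompleteSpace (H1 v)]
    (Gb : E → Type*) [∀ e, NormedAddCommGroup (Gb e)] [∀ e, InnerProductSpace ℂ (Gb e)]
    [∀ e, CompleteSpace (Gb e)]
    (Hv : V → Type*) [∀ v, NormedAddCommGroup (Hv v)] [∀ v, InnerProductSpace ℂ (Hv v)]
    [∀ v, CompleteSpace (Hv v)]
    (Γ : ∀ v, ∀ e, H1 v →L[ℂ] Gb e) (c : ℝ)
    (hc : ∀ v, ∀ f : H1 v,
      ∑ e ∈ (G.locFin v).toFinset, ‖Γ v e f‖ ^ 2 ≤ c ^ 2 * ‖f‖ ^ 2)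
    (ι : ∀ v, H1 v →L[ℂ] Hv v)
    (hι_inj : ∀ v, Function.Injective (ι v))
    (hι_contr : ∀ v, ∀ f : H1 v, ‖ι v f‖ ≤ ‖f‖)
    -- second (tilde) coupling family with energy structure
    (H1t : V → Type*) [∀ v, NormedAddCommGroup (H1t v)] [∀ v, InnerProductSpace ℂ (H1t v)]
    [∀ v, CompleteSpace (H1t v)]
    (Gbt : E → Type*) [∀ e, NormedAddCommGroup (Gbt e)] [∀ e, InnerProductSpace ℂ (Gbt e)]
    [∀ e, CompleteSpace (Gbt e)]
    (Hvt : V → Type*) [∀ v, NormedAddCommGroup (Hvt v)] [∀ v, InnerProductSpace ℂ (Hvt v)]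
    [∀ v, CompleteSpace (Hvt v)]
    (Γt : ∀ v, ∀ e, H1t v →L[ℂ] Gbt e) (ct : ℝ)
    (hct : ∀ v, ∀ u : H1t v,
      ∑ e ∈ (G.locFin v).toFinset, ‖Γt v e u‖ ^ 2 ≤ ct ^ 2 * ‖u‖ ^ 2)
    (ιt : ∀ v, H1t v →L[ℂ] Hvt v)
    (hιt_inj : ∀ v, Function.Injective (ιt v))
    (hιt_contr : ∀ v, ∀ u : H1t v, ‖ιt v u‖ ≤ ‖u‖)
    -- componentwise identification operators and their ℓ²-direct sums
    (J1 : ∀ v, H1 v →L[ℂ] H1t v) (cJ1 : ℝ) (hJ1 : ∀ v, ‖J1 v‖ ≤ cJ1)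
    (Jv : ∀ v, Hv v →L[ℂ] Hvt v) (cJ : ℝ) (hJv : ∀ v, ‖Jv v‖ ≤ cJ)
    (Jdec : lp H1 2 →L[ℂ] lp H1t 2)
    (hJdec : ∀ (f : lp H1 2) (v : V), Jdec f v = J1 v (f v))
    (J : lp Hv 2 →L[ℂ] lp Hvt 2)
    (hJ : ∀ (x : lp Hv 2) (v : V), J x v = Jv v (x v))
    (ιdec : lp H1 2 →L[ℂ] lp Hv 2)
    (hιdec : ∀ (f : lp H1 2) (v : V), ιdec f v = ι v (f v))
    (ιtdec : lp H1t 2 →L[ℂ] lp Hvt 2)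
    (hιtdec : ∀ (u : lp H1t 2) (v : V), ιtdec u v = ιt v (u v))
    (δ : ℝ) (hδ : 0 < δ)
    -- closeness of the componentwise identification operators
    (hclose : ∀ v, ∀ f : H1 v, ‖ιt v (J1 v f) - Jv v (ι v f)‖ ≤ δ * ‖f‖)
    -- the smoothing operator `B̃` for the tilde coupled space
    (Bt : lp H1t 2 →L[ℂ] lp H1t 2)
    (hBt_smooth : ∀ u : lp H1t 2, ∀ e,
      Γt (G.bd e).1 e ((u - Bt u) (G.bd e).1) = Γt (G.bd e).2 e ((u - Bt u) (G.bd e).2))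
    (hBt_small : ∀ f : lp H1 2,
      (∀ e, Γ (G.bd e).1 e (f (G.bd e).1) = Γ (G.bd e).2 e (f (G.bd e).2)) →
      ‖Bt (Jdec f)‖ ≤ δ * ‖f‖) :
    ∀ f : lp H1 2,
      (∀ e, Γ (G.bd e).1 e (f (G.bd e).1) = Γ (G.bd e).2 e (f (G.bd e).2)) →
      (∀ e, Γt (G.bd e).1 e ((Jdec f - Bt (Jdec f)) (G.bd e).1)
          = Γt (G.bd e).2 e ((Jdec f - Bt (Jdec f)) (G.bd e).2)) ∧
      ‖ιtdec (Jdec f - Bt (Jdec f)) - J (ιdec f)‖ ≤ 2 * δ * ‖f‖ := by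
  intro f hf
  refine ⟨hBt_smooth (Jdec f), ?_⟩
  have h1 : ‖ιtdec (Jdec f) - J (ιdec f)‖ ≤ δ * ‖f‖ := by
    refine lp_two_norm_le_of_pointwise f _ δ hδ.le fun v => ?_
    rw [lp.coeFn_sub, Pi.sub_apply, hιtdec, hJ, hιdec, hJdec]
    exact hclose v (f v)
  have h2 : ‖ιtdec (Bt (Jdec f))‖ ≤ 1 * ‖Bt (Jdec f)‖ := by
    refine lp_two_norm_le_of_pointwise _ _ 1 zero_le_one fun v => ?_
    rw [hιtdec, one_mul]
    exact hιt_contr v _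
  have h3 := hBt_small f hf
  have h4 : ιtdec (Jdec f - Bt (Jdec f)) - J (ιdec f)
      = (ιtdec (Jdec f) - J (ιdec f)) - ιtdec (Bt (Jdec f)) := by
    rw [map_sub]; abel
  rw [h4]
  have h5 := norm_sub_le (ιtdec (Jdec f) - J (ιdec f)) (ιtdec (Bt (Jdec f)))
  linarith
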